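/- Let d₁,…,d_l be integers and let α ∈ Φ^l be a nonzero homogeneous (2d₁,…,2d_l)-regular function. Then deg α ≥ −(d₁+⋯+d_l). Moreover, if deg α = −(d₁+⋯+d_l), then Δα = 0 and α* = α, where α*(z₁,…,z_l) = (−1)^{d₁+⋯+d_l}·z₁^{−2d₁}⋯z_l^{−2d_l}·α(z₁⁻¹,…,z_l⁻¹). -/

import Mathlib

open scoped Classical

noncomputable section

namespace Griess

open MvPolynomial

variable {k : Type} [Field k]

/-- The field `k(z₁,…,z_l)` of rational functions over `k` in `l` variables. -/
abbrev RF (k : Type) [Field k] (l : ℕ) : Type := FractionRing (MvPolynomial (Fin l) k)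

/-- The variable `zᵢ` as an element of the rational function field. -/
def zv {k : Type} [Field k] {l : ℕ} (i : Fin l) : RF k l :=
  algebraMap (MvPolynomial (Fin l) k) (RF k l) (MvPolynomial.X i)

/-- The space `Φ^l` of rational functions of the form
`p(z₁,…,z_l) · ∏_{i<j} (zᵢ - z_j)^{k_{ij}}`. -/
def Phi (k : Type) [Field k] (l : ℕ) : Set (RF k l) :=
  { x | ∃ (p : MvPolynomial (Fin l) k) (e : Fin l → Fin l → ℤ),
      x = algebraMap (MvPolynomial (Fin l) k) (RF k l) p *
        ∏ i : Fin l, ∏ j : Fin l, (if i < j then (zv i - zv j) ^ e i j else 1) }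

/-- `D` is the family of partial derivative operators `∂_{z₁},…,∂_{z_l}`:
a family of `k`-linear derivations with `D i (z j) = δ_{ij}`. -/
def IsPartialDeriv {l : ℕ} (D : Fin l → Derivation k (RF k l) (RF k l)) : Prop :=
  ∀ i j : Fin l, D i (zv j) = if j = i then 1 else 0

/-- The operator `Δ = Σᵢ ∂_{zᵢ}`. -/
def Delta {l : ℕ} (D : Fin l → Derivation k (RF k l) (RF k l)) (α : RF k l) : RF k l :=
  ∑ i, D i α

/-- The operator `Δ*(n₁,…,n_l) = Σᵢ (zᵢ² ∂_{zᵢ} + nᵢ zᵢ)`. -/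
def DeltaStar {l : ℕ} (D : Fin l → Derivation k (RF k l) (RF k l)) (n : Fin l → ℤ)
    (α : RF k l) : RF k l :=
  ∑ i, ((zv i) ^ 2 * D i α + (n i : RF k l) * zv i * α)

section Subst

variable {l : ℕ}

/-- The embedding of polynomials in `z₁,…,z_l` into rational functions of
`z₁,…,z_l` and one extra variable `t` (`= RatFunc.X`). -/
def toRatFuncHom (k : Type) [Field k] (l : ℕ) :
    Polynomial (MvPolynomial (Fin l) k) →+* RatFunc (RF k l) :=
  (algebraMap (Polynomial (RF k l)) (RatFunc (RF k l))).comp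
    (Polynomial.mapRingHom (algebraMap (MvPolynomial (Fin l) k) (RF k l)))

lemma toRatFuncHom_injective : Function.Injective (toRatFuncHom k l) := by
  have h1 : Function.Injective (algebraMap (Polynomial (RF k l)) (RatFunc (RF k l))) :=
    IsFractionRing.injective _ _
  have h2 : Function.Injective
      (Polynomial.mapRingHom (algebraMap (MvPolynomial (Fin l) k) (RF k l))) :=
    Polynomial.map_injective _ (IsFractionRing.injective _ _)
  exact fun a b hab => h2 (h1 hab)

/-- Polynomial level substitution `z_j ↦ t·z_j` for `j ∈ J`. -/
def scaleAux (k : Type) [Field k] (l : ℕ) (J : Finset (Fin l)) :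
    MvPolynomial (Fin l) k →+* Polynomial (MvPolynomial (Fin l) k) :=
  (MvPolynomial.aeval (R := k) fun i =>
    if i ∈ J then Polynomial.X * Polynomial.C (MvPolynomial.X i)
    else Polynomial.C (MvPolynomial.X i)).toRingHom

lemma scaleAux_injective (J : Finset (Fin l)) :
    Function.Injective (scaleAux k l J) := by
  have h : (Polynomial.evalRingHom (1 : MvPolynomial (Fin l) k)).comp (scaleAux k l J)
      = RingHom.id _ := by
    apply MvPolynomial.ringHom_ext
    · intro r; simp [scaleAux]
    · intro i; by_cases hi : i ∈ J <;> simp [scaleAux, hi]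
  intro p q hpq
  have hp := DFunLike.congr_fun h p
  have hq := DFunLike.congr_fun h q
  simp only [RingHom.comp_apply, RingHom.id_apply] at hp hq
  rw [← hp, ← hq, hpq]

/-- The substitution `z_j ↦ t·z_j` (for `j ∈ J`), as a map from rational functions
in `z₁,…,z_l` to rational functions in `z₁,…,z_l` and `t`.  Reading off the
coefficients of the Laurent expansion in `t` at `t = 0` of `scaleJ J α` yields the
decomposition of `α` into its homogeneous components with respect to the total degree
in the variables `{z_j : j ∈ J}`, i.e. the expansion of `α` in the domain where the
variables of `J` are much smaller than the remaining variables. -/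
def scaleJ (J : Finset (Fin l)) : RF k l →+* RatFunc (RF k l) :=
  IsFractionRing.lift (g := (toRatFuncHom k l).comp (scaleAux k l J))
    (fun a b hab => scaleAux_injective J (toRatFuncHom_injective hab))

/-- Polynomial level substitution `z_i ↦ z_j + t`. -/
def subPairAux (k : Type) [Field k] (l : ℕ) (i j : Fin l) :
    MvPolynomial (Fin l) k →+* Polynomial (MvPolynomial (Fin l) k) :=
  (MvPolynomial.aeval (R := k) fun s =>
    if s = i then Polynomial.X + Polynomial.C (MvPolynomial.X j)
    else Polynomial.C (MvPolynomial.X s)).toRingHom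

lemma subPairAux_injective (i j : Fin l) :
    Function.Injective (subPairAux k l i j) := by
  have h : (Polynomial.evalRingHom (MvPolynomial.X i - MvPolynomial.X j)).comp
      (subPairAux k l i j) = RingHom.id _ := by
    apply MvPolynomial.ringHom_ext
    · intro r; simp [subPairAux]
    · intro s; by_cases hs : s = i <;> simp [subPairAux, hs]
  intro p q hpq
  have hp := DFunLike.congr_fun h p
  have hq := DFunLike.congr_fun h q
  simp only [RingHom.comp_apply, RingHom.id_apply] at hp hq
  rw [← hp, ← hq, hpq]

/-- The substitution `z_i ↦ z_j + t`, as a map from rational functions in `z₁,…,z_l`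
to rational functions in the variables `z₁,…,z_l` and `t`.  Reading off the Laurent
coefficients in `t` at `t = 0` yields the expansion of a rational function in powers
of `z_i - z_j`, with coefficients not involving `z_i`. -/
def subPair (i j : Fin l) : RF k l →+* RatFunc (RF k l) :=
  IsFractionRing.lift (g := (toRatFuncHom k l).comp (subPairAux k l i j))
    (fun a b hab => subPairAux_injective i j (toRatFuncHom_injective hab))

end Subst

/-- The coefficient of `tᵐ` in the Laurent expansion at `t = 0` of a rational
function of `t`. -/
def lcoeff {L : Type} [Field L] (m : ℤ) (f : RatFunc L) : L :=
  (f : LaurentSeries L).coeff m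

/-- The component `(α)_n` of `α` of degree `n` with respect to the partition
`{1,…,l} = Jᶜ ⊔ J` and the weights `d`:  the part of the expansion of `α` in the
domain where the variables of `J` are much smaller than those of `Jᶜ` whose total
degree in the variables `{z_j : j ∈ J}` equals `n - Σ_{j∈J} d_j`. -/
def component {l : ℕ} (J : Finset (Fin l)) (d : Fin l → ℤ) (n : ℤ) (α : RF k l) :
    RF k l :=
  lcoeff (n - ∑ j ∈ J, d j) (scaleJ J α)

/-- `α` is homogeneous of total degree `d` in the variables `{z_i : i ∈ S}`:
substituting `z_i ↦ t·z_i` for `i ∈ S` multiplies `α` by `t^d`. -/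
def IsHomogeneousOn {l : ℕ} (S : Finset (Fin l)) (d : ℤ) (α : RF k l) : Prop :=
  scaleJ S α = RatFunc.X ^ d * RatFunc.C α

/-- `ρ^{(m)}_{ij} α`: the coefficient of `(z_i - z_j)^m` in the expansion of `α`
in powers of `z_i - z_j` (the coefficients do not involve `z_i`). -/
def rho {l : ℕ} (i j : Fin l) (m : ℤ) (α : RF k l) : RF k l :=
  lcoeff m (subPair i j α)

/-- `α` is a rational function of the variables `{z_i : i ∈ S}` only. -/
def dependsOnlyOn {l : ℕ} (S : Finset (Fin l)) (α : RF k l) : Prop :=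
  α ∈ Subfield.closure (Set.range (algebraMap k (RF k l)) ∪ {x | ∃ i ∈ S, x = zv i})

/-- `α` is an admissible function of the variables `{z_i : i ∈ S}` (the space
`R^{|S|}`):  `α ∈ Φ` is a rational function of the variables of `S` only, it is
`(4,…,4)`-regular and homogeneous of degree `-2|S|` in these variables, and all its
components of negative degree, as well as those of degree `1`, vanish (with respect
to every partition of `S` and all weights equal to `2`). -/
def Admissible {l : ℕ} (D : Fin l → Derivation k (RF k l) (RF k l)) (S : Finset (Fin l))
    (α : RF k l) : Prop :=
  α ∈ Phi k l ∧ dependsOnlyOn S α ∧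
    (∑ i ∈ S, ((zv i) ^ 2 * D i α + 4 * zv i * α)) = 0 ∧
    IsHomogeneousOn S (-(2 * (S.card : ℤ))) α ∧
    ∀ J ⊆ S, ∀ n : ℤ, (n < 0 ∨ n = 1) → component J (fun _ => 2) n α = 0

/-- `α` is an indecomposable admissible function of the variables `{z_i : i ∈ S}`
(the space `R₀^{|S|}`): admissible, and all the components `(α)₀` with respect to
partitions of `S` into two nonempty parts vanish. -/
def AdmissibleInd {l : ℕ} (D : Fin l → Derivation k (RF k l) (RF k l))
    (S : Finset (Fin l)) (α : RF k l) : Prop :=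
  Admissible D S α ∧
    ∀ J ⊆ S, J ≠ ∅ → J ≠ S → component J (fun _ => 2) 0 α = 0

section Shift

variable {l : ℕ}

/-- Polynomial level substitution `z_s ↦ z_s - z_t` for `s ∈ S`. -/
def shiftAuxP (k : Type) [Field k] (l : ℕ) (S : Finset (Fin l)) (t : Fin l) :
    MvPolynomial (Fin l) k →+* MvPolynomial (Fin l) k :=
  (MvPolynomial.aeval (R := k) fun s =>
    if s ∈ S then MvPolynomial.X s - MvPolynomial.X t else MvPolynomial.X s).toRingHom

lemma shiftAuxP_injective (S : Finset (Fin l)) (t : Fin l) (ht : t ∉ S) :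
    Function.Injective (shiftAuxP k l S t) := by
  have h : ((MvPolynomial.aeval (R := k) fun s =>
      if s ∈ S then MvPolynomial.X s + MvPolynomial.X t
      else MvPolynomial.X s).toRingHom).comp (shiftAuxP k l S t) = RingHom.id _ := by
    apply MvPolynomial.ringHom_ext
    · intro r; simp [shiftAuxP]
    · intro s
      by_cases hs : s ∈ S
      · have hst : s ≠ t := fun hst => ht (hst ▸ hs)
        simp [shiftAuxP, hs, ht]
      · simp [shiftAuxP, hs]
  intro p q hpq
  have hp := DFunLike.congr_fun h p
  have hq := DFunLike.congr_fun h q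
  simp only [RingHom.comp_apply, RingHom.id_apply] at hp hq
  rw [← hp, ← hq, hpq]

/-- The shift operator substituting `z_s - z_t` for `z_s`, for all `s ∈ S`. -/
def shiftT (S : Finset (Fin l)) (t : Fin l) (ht : t ∉ S) : RF k l →+* RF k l :=
  IsFractionRing.lift
    (g := (algebraMap (MvPolynomial (Fin l) k) (RF k l)).comp (shiftAuxP k l S t))
    (fun a b hab =>
      shiftAuxP_injective S t ht (IsFractionRing.injective _ _ hab))

/-- The operator `ℰ = Σ_{s ∈ S} (-z_s⁻¹ ∂_{z_s} + 2 z_s⁻²)`. -/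
def curlyE {l : ℕ} (D : Fin l → Derivation k (RF k l) (RF k l)) (S : Finset (Fin l))
    (β : RF k l) : RF k l :=
  ∑ s ∈ S, (-((zv s)⁻¹ * D s β) + 2 * (zv s) ^ (-2 : ℤ) * β)

end Shift

end Griess

namespace Griess

/-!
The operators `Δ`, `2 deg + ∑ᵢ nᵢ` and `-Δ*` span a copy of `sl₂`, acting on the tensor densities
`α · ∏ᵢ (dzᵢ)^(nᵢ/2)`. On `Φ^l` the lowering operator `Δ` is locally nilpotent, because it
annihilates every `zᵢ - zⱼ` and lowers the degree of polynomials. Hence the weight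
`2 deg α + ∑ᵢ nᵢ` of a regular `α` is a natural number `n`, and `Δ^(n+1) α = 0`.

In weight zero, `α` is therefore killed by both `Δ` and `Δ*`. The inversion `zᵢ ↦ zᵢ⁻¹`
interchanges these operators up to sign, so `α` and its image under the inversion are both
translation invariant. Together with homogeneity and the Weyl group relation between the inversion
and the translations, this makes `α` an eigenvector of the inversion and determines the sign.
-/

section Sl2

open LieModule

variable {R L M : Type*} [CommRing R] [LieRing L] [LieAlgebra R L]
  [AddCommGroup M] [Module R M] [LieRingModule L M] [LieModule R L M]

/- The relations are assumed without `h ≠ 0`, which is part of `IsSl2Triple`, because it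
fails for `Δ` and `Δ*` when there are no variables. -/
theorem exists_nat_of_pow_toEnd_f_eq_zero [IsDomain R] [CharZero R] [Module.IsTorsionFree R M]
    {h e f : L} (hef : ⁅e, f⁆ = h) (hhe : ⁅h, e⁆ = 2 • e) (hhf : ⁅h, f⁆ = -(2 • f))
    {m : M} {μ : R} (hm : m ≠ 0) (hμ : ⁅h, m⁆ = μ • m) (hem : ⁅e, m⁆ = 0)
    {N : ℕ} (hN : (toEnd R L M f ^ N) m = 0) :
    ∃ n : ℕ, μ = n ∧ (toEnd R L M f ^ (n + 1)) m = 0 := by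
  rcases eq_or_ne h 0 with rfl | h_ne
  · have hμ0 : μ = 0 := by simpa [hm] using hμ.symm
    have hf : (2 : R) • ⁅f, m⁆ = 0 := by
      rw [← smul_lie, two_smul, ← two_nsmul, ← neg_eq_zero, ← neg_lie, ← hhf, zero_lie, zero_lie]
    exact ⟨0, by simpa using hμ0, by simpa using hf⟩
  · have t : IsSl2Triple h e f := ⟨h_ne, hef, hhe, hhf⟩
    have P : t.HasPrimitiveVectorWith m μ := ⟨hm, hμ, hem⟩
    obtain ⟨n, hn, hn'⟩ := Nat.exists_not_and_succ_of_not_zero_of_exists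
      (p := fun n => (toEnd R L M f ^ n) m = 0) (by simpa using hm) ⟨N, hN⟩
    have h_smul := P.lie_e_pow_succ_toEnd_f n
    rw [hn', lie_zero, eq_comm, smul_eq_zero_iff_left hn, mul_eq_zero, sub_eq_zero] at h_smul
    exact ⟨n, h_smul.resolve_left n.cast_add_one_ne_zero, hn'⟩

end Sl2

section Translate

open MvPolynomial

variable {σ R : Type*} [CommRing R]

/-- The derivation `∑ᵢ ∂/∂Xᵢ` of a polynomial ring, in possibly infinitely many variables. -/
def diagDeriv (σ R : Type*) [CommRing R] :
    Derivation R (MvPolynomial σ R) (MvPolynomial σ R) :=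
  mkDerivation R 1

/-- The diagonal translation `p(X) ↦ p(X + t)`, as a polynomial in `t` over the polynomial ring. -/
def translate (σ R : Type*) [CommRing R] :
    MvPolynomial σ R →ₐ[R] Polynomial (MvPolynomial σ R) :=
  aeval fun i => Polynomial.C (X i) + Polynomial.X

theorem diagDeriv_X (i : σ) : diagDeriv σ R (X i) = 1 :=
  mkDerivation_X R 1 i

theorem translate_C (r : R) : translate σ R (C r) = Polynomial.C (C r) :=
  (translate σ R).commutes r

theorem translate_X (i : σ) : translate σ R (X i) = Polynomial.C (X i) + Polynomial.X :=
  aeval_X _ i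

theorem derivative_translate (p : MvPolynomial σ R) :
    Polynomial.derivative (translate σ R p) = translate σ R (diagDeriv σ R p) := by
  induction p using MvPolynomial.induction_on with
  | C r => simp only [translate_C, derivation_C, Polynomial.derivative_C, map_zero]
  | add p q hp hq => simp only [map_add, hp, hq]
  | mul_X p i hp =>
    simp only [map_mul, Polynomial.derivative_mul, hp, Derivation.leibniz, smul_eq_mul, map_add,
      diagDeriv_X, translate_X, Polynomial.derivative_C, Polynomial.derivative_X, map_one]
    ring

theorem iterate_derivative_translate (p : MvPolynomial σ R) (n : ℕ) :
    Polynomial.derivative^[n] (translate σ R p) = translate σ R ((diagDeriv σ R)^[n] p) :=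
  ((Function.Semiconj.iterate_right (f := translate σ R)
    (fun q => (derivative_translate q).symm) n) p).symm

theorem eval_zero_translate (p : MvPolynomial σ R) :
    Polynomial.eval 0 (translate σ R p) = p := by
  have h : (Polynomial.evalRingHom (0 : MvPolynomial σ R)).comp (translate σ R : _ →+* _) =
      RingHom.id _ :=
    ringHom_ext (fun r => by simp) (fun i => by simp [translate_X])
  exact DFunLike.congr_fun h p

theorem translate_injective : Function.Injective (translate σ R) :=
  Function.LeftInverse.injective eval_zero_translate

theorem exists_iterate_diagDeriv_eq_zero (p : MvPolynomial σ R) :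
    ∃ N : ℕ, (diagDeriv σ R)^[N] p = 0 := by
  refine ⟨(translate σ R p).natDegree + 1, translate_injective ?_⟩
  rw [← iterate_derivative_translate, map_zero,
    Polynomial.iterate_derivative_eq_zero (Nat.lt_succ_self _)]

variable [IsDomain R]

/- By degrees in `t`, `p(X + t)` can divide its `t`-derivative only if the latter vanishes. -/
theorem diagDeriv_eq_zero_of_dvd {p : MvPolynomial σ R} (hp : p ∣ diagDeriv σ R p) :
    diagDeriv σ R p = 0 := by
  have h_dvd := map_dvd (translate σ R) hp
  rw [← derivative_translate, Polynomial.dvd_derivative_iff, derivative_translate] at h_dvd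
  exact translate_injective (h_dvd.trans (map_zero _).symm)

theorem translate_eq_C_of_diagDeriv_eq_zero [CharZero R] {p : MvPolynomial σ R}
    (hp : diagDeriv σ R p = 0) :
    translate σ R p = Polynomial.C p := by
  have h_const := Polynomial.eq_C_of_derivative_eq_zero
    ((derivative_translate p).trans (by rw [hp, map_zero]))
  rwa [Polynomial.coeff_zero_eq_eval_zero, eval_zero_translate] at h_const

end Translate

section RationalFunctions

open MvPolynomial

variable {k : Type} [Field k] {l : ℕ}

theorem zv_ne_zero (i : Fin l) : (zv i : RF k l) ≠ 0 :=
  (map_ne_zero_iff _ (IsFractionRing.injective _ _)).2 (X_ne_zero i)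

theorem algebraMap_X (i : Fin l) : algebraMap (MvPolynomial (Fin l) k) (RF k l) (X i) = zv i :=
  rfl

theorem algebraMap_C (c : k) :
    algebraMap (MvPolynomial (Fin l) k) (RF k l) (C c) = algebraMap k (RF k l) c :=
  (IsScalarTower.algebraMap_apply k (MvPolynomial (Fin l) k) (RF k l) c).symm

theorem algHom_ext_zv {B : Type*} [CommRing B] [Algebra k B] {φ ψ : RF k l →ₐ[k] B}
    (h : ∀ i, φ (zv i) = ψ (zv i)) : φ = ψ :=
  Localization.algHom_ext _ (MvPolynomial.algHom_ext h)

theorem derivation_ext_zv {δ δ' : Derivation k (RF k l) (RF k l)}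
    (h : ∀ i, δ (zv i) = δ' (zv i)) : δ = δ' := by
  have h_poly (p : MvPolynomial (Fin l) k) :
      δ (algebraMap _ (RF k l) p) = δ' (algebraMap _ (RF k l) p) :=
    Derivation.congr_fun (D1 := δ.compAlgebraMap (MvPolynomial (Fin l) k))
      (D2 := δ'.compAlgebraMap (MvPolynomial (Fin l) k)) (derivation_ext h) p
  ext x
  rw [← IsFractionRing.mk'_num_den' (MvPolynomial (Fin l) k) x]
  simp only [Derivation.leibniz_div, h_poly]

/-- The automorphism of the field of rational functions that substitutes `zᵢ + c` for every
`zᵢ`. -/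
def shift (c : k) : RF k l ≃ₐ[k] RF k l :=
  IsFractionRing.algEquivOfAlgEquiv (A := MvPolynomial (Fin l) k) (B := MvPolynomial (Fin l) k) <|
    AlgEquiv.ofAlgHom (aeval fun i => X i + C c) (aeval fun i => X i - C c)
      (MvPolynomial.algHom_ext fun i => by simp [← algebraMap_eq])
      (MvPolynomial.algHom_ext fun i => by simp [← algebraMap_eq])

theorem shift_zv (c : k) (i : Fin l) :
    shift c (zv i) = (zv i + algebraMap k (RF k l) c : RF k l) := by
  simp [shift, zv, algebraMap_C]

theorem algebraMap_diagDeriv {δ : Derivation k (RF k l) (RF k l)} (hδ : ∀ i, δ (zv i) = 1)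
    (p : MvPolynomial (Fin l) k) :
    δ (algebraMap _ (RF k l) p) = algebraMap _ (RF k l) (diagDeriv (Fin l) k p) :=
  Derivation.congr_fun (D1 := δ.compAlgebraMap (MvPolynomial (Fin l) k))
    (D2 := (Algebra.linearMap _ (RF k l)).compDer (diagDeriv (Fin l) k))
    (derivation_ext fun i => by simp [diagDeriv_X, algebraMap_X, hδ]) p

theorem derivation_prod_eq {ι : Type*} (δ : Derivation k (RF k l) (RF k l)) (s : Finset ι)
    (f g : ι → RF k l) (h : ∀ i ∈ s, δ (f i) = g i * f i) :
    δ (∏ i ∈ s, f i) = (∑ i ∈ s, g i) * ∏ i ∈ s, f i := by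
  induction s using Finset.induction_on with
  | empty => simp
  | insert i s hi ih =>
    rw [Finset.prod_insert hi, Finset.sum_insert hi, Derivation.leibniz,
      ih fun j hj => h j (Finset.mem_insert_of_mem hj), h i (Finset.mem_insert_self i s)]
    simp only [smul_eq_mul]
    ring

theorem exists_iterate_eq_zero_of_mem_Phi {δ : Derivation k (RF k l) (RF k l)}
    (hδ : ∀ i, δ (zv i) = 1) {x : RF k l} (hx : x ∈ Phi k l) : ∃ N : ℕ, δ^[N] x = 0 := by
  obtain ⟨p, e, rfl⟩ := hx
  set u : RF k l := ∏ i : Fin l, ∏ j : Fin l, if i < j then (zv i - zv j) ^ e i j else 1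
  have hu : δ u = 0 := by
    have h_factor (i j : Fin l) :
        δ (if i < j then (zv i - zv j) ^ e i j else 1) = 0 := by
      split_ifs <;> simp [Derivation.leibniz_zpow, hδ]
    simpa using derivation_prod_eq δ Finset.univ _ 0 fun i _ => by
      simpa using derivation_prod_eq δ Finset.univ _ 0 fun j _ => by simpa using h_factor i j
  have h_semiconj : Function.Semiconj (fun q => algebraMap _ (RF k l) q * u)
      (diagDeriv (Fin l) k) δ := fun q => by
    simp [hu, algebraMap_diagDeriv hδ, mul_comm]
  obtain ⟨N, hN⟩ := exists_iterate_diagDeriv_eq_zero p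
  exact ⟨N, by simpa [hN] using (h_semiconj.iterate_right N p).symm⟩

section Translation

variable {K : Type*} [Field K] [Algebra k K]

theorem algHom_eq_eval₂_translate {φ ψ : RF k l →ₐ[k] K} {c : K}
    (h : ∀ i, ψ (zv i) = φ (zv i) + c) (p : MvPolynomial (Fin l) k) :
    ψ (algebraMap _ (RF k l) p) = Polynomial.eval₂
      ((φ : RF k l →+* K).comp (algebraMap _ (RF k l))) c (translate (Fin l) k p) := by
  induction p using MvPolynomial.induction_on with
  | C r => simp [algebraMap_C]
  | add p q hp hq => simp only [map_add, hp, hq, Polynomial.eval₂_add]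
  | mul_X p i hp =>
    simp [hp, translate_X, algebraMap_X, h, Polynomial.eval₂_mul]

theorem diagDeriv_num_den_eq_zero [CharZero k] {δ : Derivation k (RF k l) (RF k l)}
    (hδ : ∀ i, δ (zv i) = 1) {x : RF k l} (hx : δ x = 0) :
    diagDeriv (Fin l) k (IsFractionRing.num _ x) = 0 ∧
      diagDeriv (Fin l) k (IsFractionRing.den (MvPolynomial (Fin l) k) x) = 0 := by
  set p := IsFractionRing.num (MvPolynomial (Fin l) k) x
  set q := IsFractionRing.den (MvPolynomial (Fin l) k) x
  have hq : (q : MvPolynomial (Fin l) k) ≠ 0 := nonZeroDivisors.ne_zero q.2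
  have h_cross : (q : MvPolynomial (Fin l) k) * diagDeriv (Fin l) k p =
      p * diagDeriv (Fin l) k q := by
    rw [← IsFractionRing.mk'_num_den' (MvPolynomial (Fin l) k) x, Derivation.leibniz_div] at hx
    apply IsFractionRing.injective (MvPolynomial (Fin l) k) (RF k l)
    simpa [algebraMap_diagDeriv hδ, hq, sub_eq_zero, p, q] using hx
  have hq_dvd : (q : MvPolynomial (Fin l) k) ∣ diagDeriv (Fin l) k q :=
    (IsFractionRing.num_den_reduced _ x).symm.dvd_of_dvd_mul_left ⟨_, h_cross.symm⟩
  have hδq := diagDeriv_eq_zero_of_dvd hq_dvd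
  exact ⟨by simpa [hδq, hq] using h_cross, hδq⟩

theorem algHom_eq_of_translate [CharZero k] {δ : Derivation k (RF k l) (RF k l)}
    (hδ : ∀ i, δ (zv i) = 1) {x : RF k l} (hx : δ x = 0) {φ ψ : RF k l →ₐ[k] K} {c : K}
    (h : ∀ i, ψ (zv i) = φ (zv i) + c) : ψ x = φ x := by
  have h_poly {p : MvPolynomial (Fin l) k} (hp : diagDeriv (Fin l) k p = 0) :
      ψ (algebraMap _ (RF k l) p) = φ (algebraMap _ (RF k l) p) := by
    rw [algHom_eq_eval₂_translate h, translate_eq_C_of_diagDeriv_eq_zero hp, Polynomial.eval₂_C]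
    rfl
  obtain ⟨h_num, h_den⟩ := diagDeriv_num_den_eq_zero hδ hx
  rw [← IsFractionRing.mk'_num_den' (MvPolynomial (Fin l) k) x, map_div₀, map_div₀,
    h_poly h_num, h_poly h_den]

theorem shift_eq_self [CharZero k] {δ : Derivation k (RF k l) (RF k l)}
    (hδ : ∀ i, δ (zv i) = 1) {x : RF k l} (hx : δ x = 0) (c : k) : shift c x = x :=
  algHom_eq_of_translate hδ hx (φ := AlgHom.id k (RF k l))
    (ψ := (shift c : RF k l ≃ₐ[k] RF k l).toAlgHom) fun i => shift_zv c i

end Translation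

end RationalFunctions

section DualNumbers

variable {k A : Type*} [CommRing k] [CommRing A] [Algebra k A]

/-- The algebra homomorphism `x ↦ x + ε δ(x)` to the dual numbers given by a derivation `δ`. -/
def dualNumberHom (δ : Derivation k A A) : A →ₐ[k] DualNumber A :=
  AlgHom.ofLinearMap
    ((TrivSqZeroExt.inlAlgHom k A A).toLinearMap +
      (TrivSqZeroExt.inrHom A A).restrictScalars k ∘ₗ (δ : A →ₗ[k] A))
    (by simp) (fun x y => by ext <;> simp [mul_comm])

theorem dualNumberHom_apply (δ : Derivation k A A) (x : A) :
    dualNumberHom δ x = TrivSqZeroExt.inl x + TrivSqZeroExt.inr (δ x) := rfl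

end DualNumbers

section Homogeneity

open MvPolynomial

variable {k : Type} [Field k] {l : ℕ} {S : Finset (Fin l)} {m : ℤ} {x : RF k l}

theorem scaleJ_algebraMap (p : MvPolynomial (Fin l) k) :
    scaleJ S (algebraMap _ (RF k l) p) = toRatFuncHom k l (scaleAux k l S p) :=
  IsFractionRing.lift_algebraMap (g := (toRatFuncHom k l).comp (scaleAux k l S))
    (toRatFuncHom_injective.comp (scaleAux_injective S)) p

theorem toRatFuncHom_C (p : MvPolynomial (Fin l) k) :
    toRatFuncHom k l (Polynomial.C p) = RatFunc.C (algebraMap _ (RF k l) p) := by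
  simp [toRatFuncHom]

theorem toRatFuncHom_X : toRatFuncHom k l Polynomial.X = RatFunc.X := by
  simp [toRatFuncHom]

theorem IsHomogeneousOn.exists_X_pow_mul_scaleAux_eq (hx : IsHomogeneousOn S m x)
    {p q : MvPolynomial (Fin l) k} (hpq : x * algebraMap _ (RF k l) q = algebraMap _ (RF k l) p) :
    ∃ a b : ℕ, m = b - a ∧
      Polynomial.X ^ a * scaleAux k l S p * Polynomial.C q =
        Polynomial.X ^ b * Polynomial.C p * scaleAux k l S q := by
  have hm : m = (m.toNat : ℤ) - (-m).toNat := (Int.toNat_sub_toNat_neg m).symm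
  refine ⟨(-m).toNat, m.toNat, hm, toRatFuncHom_injective ?_⟩
  have h_pow : (RatFunc.X : RatFunc (RF k l)) ^ (-m).toNat * RatFunc.X ^ m =
      RatFunc.X ^ m.toNat := by
    rw [← zpow_natCast, ← zpow_natCast, ← zpow_add₀ RatFunc.X_ne_zero, hm]
    congr 1
    omega
  rw [IsHomogeneousOn] at hx
  simp only [map_mul, map_pow, toRatFuncHom_C, toRatFuncHom_X, ← scaleJ_algebraMap,
    ← hpq, hx, ← h_pow]
  ring

theorem algHom_eq_eval₂_scaleAux {B : Type*} [CommRing B] [Algebra k B] {φ ψ : RF k l →ₐ[k] B}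
    {t : B} (h : ∀ i, ψ (zv i) = φ (zv i) * if i ∈ S then t else 1)
    (p : MvPolynomial (Fin l) k) :
    ψ (algebraMap _ (RF k l) p) = Polynomial.eval₂
      ((φ : RF k l →+* B).comp (algebraMap _ (RF k l))) t (scaleAux k l S p) := by
  induction p using MvPolynomial.induction_on with
  | C r => simp [algebraMap_C, scaleAux]
  | add p q hp hq => simp only [map_add, hp, hq, Polynomial.eval₂_add]
  | mul_X p i hp =>
    have h_var : Polynomial.eval₂ ((φ : RF k l →+* B).comp (algebraMap _ (RF k l))) t
        (scaleAux k l S (X i)) = ψ (zv i) := by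
      by_cases hi : i ∈ S <;> simp [scaleAux, hi, h, algebraMap_X]
    rw [map_mul, map_mul, map_mul, Polynomial.eval₂_mul, h_var, hp, algebraMap_X]

theorem IsHomogeneousOn.exists_pow_mul_algHom_eq {B : Type*} [CommRing B] [Algebra k B]
    {φ ψ : RF k l →ₐ[k] B} {t : B} (hx : IsHomogeneousOn S m x)
    (h : ∀ i, ψ (zv i) = φ (zv i) * if i ∈ S then t else 1) :
    ∃ a b : ℕ, m = b - a ∧ t ^ a * ψ x = t ^ b * φ x := by
  obtain ⟨⟨p, q⟩, hpq⟩ := IsLocalization.surj (nonZeroDivisors (MvPolynomial (Fin l) k)) x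
  have hq := IsLocalization.map_units (RF k l) q
  obtain ⟨a, b, hm, h_cross⟩ := hx.exists_X_pow_mul_scaleAux_eq hpq
  refine ⟨a, b, hm, (hq.map φ).mul_right_cancel <| (hq.map ψ).mul_right_cancel ?_⟩
  have h_eval := congrArg
    (Polynomial.eval₂ ((φ : RF k l →+* B).comp (algebraMap _ (RF k l))) t) h_cross
  simp only [Polynomial.eval₂_mul, Polynomial.eval₂_pow, Polynomial.eval₂_X, Polynomial.eval₂_C,
    ← algHom_eq_eval₂_scaleAux h, RingHom.comp_apply, ← hpq, map_mul, AlgHom.coe_toRingHom]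
    at h_eval
  linear_combination h_eval

theorem IsHomogeneousOn.algHom_neg (hx : IsHomogeneousOn Finset.univ m x)
    {K : Type*} [Field K] [Algebra k K] {φ ψ : RF k l →ₐ[k] K}
    (h : ∀ i, ψ (zv i) = -φ (zv i)) : ψ x = (-1) ^ m * φ x := by
  obtain ⟨a, b, rfl, h_eq⟩ := hx.exists_pow_mul_algHom_eq (φ := φ) (ψ := ψ) (t := -1)
    (by simpa using h)
  rw [zpow_sub₀ (neg_ne_zero.2 one_ne_zero), zpow_natCast, zpow_natCast, div_mul_eq_mul_div,
    eq_div_iff (pow_ne_zero a (neg_ne_zero.2 one_ne_zero)), ← h_eq, mul_comm]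

/- Euler's theorem, obtained from the substitution `zᵢ ↦ (1 + ε) zᵢ` over the dual numbers. -/
theorem IsHomogeneousOn.derivation_eq (hx : IsHomogeneousOn S m x)
    {δ : Derivation k (RF k l) (RF k l)} (hδ : ∀ i, δ (zv i) = if i ∈ S then zv i else 0) :
    δ x = m * x := by
  obtain ⟨a, b, rfl, h_eq⟩ := hx.exists_pow_mul_algHom_eq (ψ := dualNumberHom δ)
    (φ := TrivSqZeroExt.inlAlgHom k (RF k l) (RF k l)) (t := 1 + DualNumber.eps) fun i => by
      ext <;> by_cases hi : i ∈ S <;> simp [dualNumberHom_apply, hδ, hi]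
  have h_snd : δ x + a * x = b * x := by
    simpa [dualNumberHom_apply, TrivSqZeroExt.snd_pow] using congrArg TrivSqZeroExt.snd h_eq
  push_cast
  linear_combination h_snd

end Homogeneity

section Witt

variable {k : Type} [Field k] {l : ℕ} {D : Fin l → Derivation k (RF k l) (RF k l)}

/-- The Witt algebra operator `Lₘ = ∑ᵢ zᵢᵐ⁺¹ ∂/∂zᵢ`. -/
def wittField (D : Fin l → Derivation k (RF k l) (RF k l)) (m : ℤ) :
    Derivation k (RF k l) (RF k l) :=
  ∑ i, (zv i : RF k l) ^ (m + 1) • D i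

theorem wittField_apply (m : ℤ) (x : RF k l) :
    wittField D m x = ∑ i, (zv i) ^ (m + 1) * D i x := by
  change Derivation.coeFnAddMonoidHom (wittField D m) x = _
  simp [wittField, Derivation.coeFnAddMonoidHom]

theorem coe_wittField_neg_one : ⇑(wittField D (-1)) = Delta D := by
  ext x
  simp [wittField_apply, Delta]

theorem wittField_zv (hD : IsPartialDeriv D) (m : ℤ) (i : Fin l) :
    wittField D m (zv i) = zv i ^ (m + 1) := by
  simp [wittField_apply, hD _ i]

theorem wittField_zv_zpow (hD : IsPartialDeriv D) (m n : ℤ) (i : Fin l) :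
    wittField D m ((zv i : RF k l) ^ n) = n * (zv i : RF k l) ^ (m + n) := by
  rw [Derivation.leibniz_zpow, wittField_zv hD, smul_eq_mul, zsmul_eq_mul,
    ← zpow_add₀ (zv_ne_zero i), sub_add_add_cancel, add_comm n]

theorem lie_wittField (hD : IsPartialDeriv D) (m n : ℤ) :
    ⁅wittField D m, wittField D n⁆ = (n - m) • wittField D (m + n) := by
  refine derivation_ext_zv fun i => ?_
  simp only [Derivation.commutator_apply, wittField_zv hD, wittField_zv_zpow hD,
    Derivation.smul_apply, zsmul_eq_mul]
  push_cast
  ring_nf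

/-- The weighted power sum `∑ᵢ wᵢ zᵢᵐ`, with a possibly negative exponent. -/
def weightedPsum (k : Type) [Field k] (w : Fin l → ℤ) (m : ℤ) : RF k l :=
  ∑ i, (w i : RF k l) * zv i ^ m

theorem wittField_weightedPsum (hD : IsPartialDeriv D) (w : Fin l → ℤ) (m n : ℤ) :
    wittField D m (weightedPsum k w n) = n * weightedPsum k w (m + n) := by
  simp only [weightedPsum, map_sum, Derivation.leibniz, Derivation.map_intCast,
    wittField_zv_zpow hD, smul_eq_mul, mul_zero, add_zero, Finset.mul_sum]
  exact Finset.sum_congr rfl fun i _ => mul_left_comm ..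

/-- The action of the Witt algebra operator `Lₘ` on the tensor density
`x · ∏ᵢ (dzᵢ)^(wᵢ/2)`: the derivation `Lₘ` plus multiplication by `(m + 1)/2 · ∑ᵢ wᵢ zᵢᵐ`. -/
def densityOp (D : Fin l → Derivation k (RF k l) (RF k l)) (w : Fin l → ℤ) (m : ℤ) :
    Module.End k (RF k l) :=
  (wittField D m : RF k l →ₗ[k] RF k l) +
    LinearMap.mulLeft k ((m + 1) / 2 * weightedPsum k w m)

theorem densityOp_apply (w : Fin l → ℤ) (m : ℤ) (x : RF k l) :
    densityOp D w m x = wittField D m x + (m + 1) / 2 * weightedPsum k w m * x := by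
  simp [densityOp, mul_assoc]

attribute [local instance] LieRing.ofAssociativeRing

theorem lie_densityOp [CharZero k] (hD : IsPartialDeriv D) (w : Fin l → ℤ) (m n : ℤ) :
    ⁅densityOp D w m, densityOp D w n⁆ = (n - m : k) • densityOp D w (m + n) := by
  have h_const (m n : ℤ) : wittField D m ((n + 1) / 2) = 0 := by
    have h_div : algebraMap k (RF k l) ((n + 1) / 2) = (n + 1) / 2 := by
      rw [map_div₀, map_add, map_intCast, map_one, map_ofNat]
    rw [← h_div, Derivation.map_algebraMap]
  ext x
  have h_witt := Derivation.congr_fun (lie_wittField hD m n) x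
  rw [Derivation.commutator_apply, Derivation.smul_apply, zsmul_eq_mul] at h_witt
  rw [LinearMap.smul_apply, Algebra.smul_def, map_sub, map_intCast, map_intCast]
  simp only [LieRing.of_associative_ring_bracket, LinearMap.sub_apply, Module.End.mul_apply,
    densityOp_apply, map_add,
    Derivation.leibniz, smul_eq_mul, wittField_weightedPsum hD, h_const, add_comm n m]
  push_cast at h_witt ⊢
  linear_combination h_witt

theorem coe_densityOp_neg_one (w : Fin l → ℤ) : ⇑(densityOp D w (-1)) = Delta D := by
  ext x
  simp [densityOp_apply, coe_wittField_neg_one]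

theorem densityOp_one [CharZero k] (w : Fin l → ℤ) (x : RF k l) :
    densityOp D w 1 x = DeltaStar D w x := by
  simp [densityOp_apply, wittField_apply, weightedPsum, DeltaStar,
    Finset.sum_add_distrib, Finset.sum_mul]

variable [CharZero k] {w : Fin l → ℤ} {m : ℤ} {α : RF k l}

theorem densityOp_zero_apply (hD : IsPartialDeriv D) (hα : IsHomogeneousOn Finset.univ m α)
    (w : Fin l → ℤ) :
    densityOp D w 0 α = ((m + (∑ i, w i : ℤ) / 2 : k)) • α := by
  have h_div : algebraMap k (RF k l) ((∑ i, w i : ℤ) / 2) = (∑ i, w i : ℤ) / 2 := by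
    rw [map_div₀, map_intCast, map_ofNat]
  rw [densityOp_apply, hα.derivation_eq (by simp [wittField_zv hD]), Algebra.smul_def, map_add,
    map_intCast, h_div]
  simp only [weightedPsum, zpow_zero, mul_one, Int.cast_zero, zero_add]
  push_cast
  ring

theorem exists_nat_eq_two_mul_degree_add_sum (hD : IsPartialDeriv D) (hΦ : α ∈ Phi k l)
    (hne : α ≠ 0) (hα : IsHomogeneousOn Finset.univ m α) (hreg : DeltaStar D w α = 0) :
    ∃ n : ℕ, 2 * m + ∑ i, w i = n ∧ (Delta D)^[n + 1] α = 0 := by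
  obtain ⟨N, hN⟩ := exists_iterate_eq_zero_of_mem_Phi (δ := wittField D (-1))
    (fun i => by simp [wittField_zv hD]) hΦ
  have h_lie := lie_densityOp hD w
  have h_iter : (densityOp D w (-1))^[N] α = 0 := by
    rwa [coe_densityOp_neg_one, ← coe_wittField_neg_one]
  obtain ⟨n, hn, h_pow⟩ := exists_nat_of_pow_toEnd_f_eq_zero (R := k) (M := RF k l)
    (h := 2 • densityOp D w 0) (e := -densityOp D w 1) (f := densityOp D w (-1))
    (μ := 2 * m + (∑ i, w i : ℤ)) (m := α) (N := N)
    (by rw [neg_lie, lie_skew, h_lie]; norm_num [ofNat_smul_eq_nsmul])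
    (by rw [lie_neg, nsmul_lie, h_lie]; simp)
    (by rw [nsmul_lie, h_lie]; simp)
    hne
    (by
      rw [Module.End.lie_apply, ← ofNat_smul_eq_nsmul k, LinearMap.smul_apply,
        densityOp_zero_apply hD hα, smul_smul]
      congr 1
      ring)
    (by simp [densityOp_one, hreg])
    (by rwa [LieModule.toEnd_module_end, LieHom.id_apply, Module.End.pow_apply])
  rw [LieModule.toEnd_module_end, LieHom.id_apply, Module.End.pow_apply] at h_pow
  refine ⟨n, by exact_mod_cast hn, ?_⟩
  rwa [← coe_densityOp_neg_one w]

end Witt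

section Inversion

variable {k : Type} [Field k] {l : ℕ} {D : Fin l → Derivation k (RF k l) (RF k l)}
  {ι : RF k l →ₐ[k] RF k l} {w : Fin l → ℤ} {m : ℤ} {α : RF k l}

theorem neg_one_zpow_neg {K : Type*} [DivisionRing K] (n : ℤ) :
    (-1 : K) ^ (-n) = (-1) ^ n := by
  rw [← inv_zpow', inv_neg_one]

theorem zpow_sum {K σ : Type*} [CommGroupWithZero K] {a : K} (ha : a ≠ 0) (s : Finset σ)
    (f : σ → ℤ) : a ^ (∑ i ∈ s, f i) = ∏ i ∈ s, a ^ f i := by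
  induction s using Finset.induction_on with
  | empty => simp
  | insert i s hi ih => rw [Finset.sum_insert hi, Finset.prod_insert hi, zpow_add₀ ha, ih]

theorem inversion_inversion (hι : ∀ i, ι (zv i) = (zv i)⁻¹) (x : RF k l) : ι (ι x) = x :=
  DFunLike.congr_fun (algHom_ext_zv (φ := ι.comp ι) (ψ := AlgHom.id k _)
    fun i => by simp [hι]) x

theorem wittField_inversion (hD : IsPartialDeriv D) (hι : ∀ i, ι (zv i) = (zv i)⁻¹) (n : ℤ)
    (x : RF k l) : wittField D n (ι x) = -ι (wittField D (-n) x) := by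
  let conj : Derivation k (RF k l) (RF k l) :=
    Derivation.mk' (ι.toLinearMap ∘ₗ (wittField D (-n) : RF k l →ₗ[k] RF k l) ∘ₗ ι.toLinearMap)
      fun a b => by simp [inversion_inversion hι]
  have h_conj (y : RF k l) : conj y = ι (wittField D (-n) (ι y)) := rfl
  have h_eq : wittField D n = -conj := derivation_ext_zv fun i => by
    have h_inv := wittField_zv_zpow hD (-n) (-1) i
    rw [zpow_neg_one, ← neg_add] at h_inv
    simp [h_conj, hι, h_inv, wittField_zv hD]
  rw [h_eq, Derivation.neg_apply, h_conj, inversion_inversion hι]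

/-- The pullback `∏ᵢ zᵢ^(-wᵢ) · ι x` of the tensor density `x · ∏ᵢ (dzᵢ)^(wᵢ/2)` along the
inversion `ι : zᵢ ↦ zᵢ⁻¹`, up to the sign of the change of variables. -/
def densityInv (ι : RF k l →ₐ[k] RF k l) (w : Fin l → ℤ) (x : RF k l) : RF k l :=
  (∏ i, zv i ^ (-w i)) * ι x

theorem Delta_densityInv [CharZero k] (hD : IsPartialDeriv D)
    (hι : ∀ i, ι (zv i) = (zv i)⁻¹) (w : Fin l → ℤ) (x : RF k l) :
    Delta D (densityInv ι w x) = -densityInv ι w (DeltaStar D w x) := by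
  have h_prod : wittField D (-1) (∏ i, (zv i : RF k l) ^ (-w i)) =
      -weightedPsum k w (-1) * ∏ i, (zv i : RF k l) ^ (-w i) := by
    rw [weightedPsum, ← Finset.sum_neg_distrib]
    refine derivation_prod_eq _ _ _ _ fun i _ => ?_
    rw [wittField_zv_zpow hD, zpow_add₀ (zv_ne_zero i)]
    push_cast
    ring
  have h_psum : ι (weightedPsum k w 1) = weightedPsum k w (-1) := by
    simp [weightedPsum, hι]
  rw [← coe_wittField_neg_one, ← densityOp_one, densityOp_apply, densityInv, densityInv,
    Derivation.leibniz, h_prod, wittField_inversion hD hι, neg_neg]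
  simp only [smul_eq_mul, map_add, map_mul, map_div₀, h_psum, map_intCast, map_one, map_ofNat]
  push_cast
  ring

theorem shift_inversion_eq (hι : ∀ i, ι (zv i) = (zv i)⁻¹)
    (hα : IsHomogeneousOn Finset.univ m α) :
    ι (shift (-1) (ι α)) = (-1) ^ m * shift (-1) (ι (shift 1 α)) := by
  refine hα.algHom_neg (ψ := (ι.comp (shift (-1) : RF k l ≃ₐ[k] RF k l).toAlgHom).comp ι)
    (φ := ((shift (-1) : RF k l ≃ₐ[k] RF k l).toAlgHom.comp ι).comp
      (shift 1 : RF k l ≃ₐ[k] RF k l).toAlgHom) fun i => ?_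
  have hz : (zv i : RF k l) ≠ 0 := zv_ne_zero i
  have hz1 : (zv i : RF k l) - 1 ≠ 0 := by
    simpa [shift_zv, sub_eq_add_neg] using (map_ne_zero (shift (-1) : RF k l ≃ₐ[k] RF k l)).2 hz
  have h_val : ((zv i : RF k l)⁻¹ - 1)⁻¹ = -((zv i - 1)⁻¹ + 1) := by
    have h_inv : (zv i : RF k l)⁻¹ - 1 = -(zv i - 1) / zv i := by
      field_simp
      ring
    rw [h_inv, inv_div]
    field_simp
    ring
  simpa [shift_zv, hι, sub_eq_add_neg] using h_val

theorem inversion_shift_prod (hι : ∀ i, ι (zv i) = (zv i)⁻¹) (w : Fin l → ℤ) :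
    ι (shift (-1) (∏ i, (zv i : RF k l) ^ (-w i))) * ∏ i, (zv i : RF k l) ^ (-w i) =
      (-1) ^ (∑ i, w i) * shift (-1) (∏ i, (zv i : RF k l) ^ (-w i)) := by
  have h_factor (i : Fin l) : ι (shift (-1) (zv i)) * zv i = -1 * shift (-1) (zv i) := by
    have hz : (zv i : RF k l) ≠ 0 := zv_ne_zero i
    simp only [shift_zv, map_add, map_neg, map_one, hι]
    field_simp
    ring
  rw [← neg_one_zpow_neg, ← Finset.sum_neg_distrib, zpow_sum (neg_ne_zero.2 one_ne_zero)]
  simp only [map_prod, map_zpow₀, ← Finset.prod_mul_distrib, ← mul_zpow, h_factor]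

/- Conjugating `z ↦ z - 1` by the inversion gives `z/(1 - z) = -(1 + 1/(z - 1))`, which is, up to
`z ↦ -z`, the inversion between two translations. On an `SL₂`-invariant density the inversion
therefore acts like the rescaling `z ↦ -z`. -/
theorem densityInv_eq_of_invariant [CharZero k] (hD : IsPartialDeriv D)
    (hι : ∀ i, ι (zv i) = (zv i)⁻¹) (hα : IsHomogeneousOn Finset.univ m α)
    (hΔ : Delta D α = 0) (hreg : DeltaStar D w α = 0) :
    (-1) ^ (m + ∑ i, w i) * densityInv ι w α = α := by
  have hδ (i : Fin l) : wittField D (-1) (zv i) = 1 := by simp [wittField_zv hD]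
  have hΔ_inv : Delta D (densityInv ι w α) = 0 := by
    rw [Delta_densityInv hD hι, hreg]
    simp [densityInv]
  have h_shift : shift 1 α = α := shift_eq_self hδ (by rwa [coe_wittField_neg_one]) 1
  have h_shift_inv : shift (-1) (densityInv ι w α) = densityInv ι w α :=
    shift_eq_self hδ (by rwa [coe_wittField_neg_one]) (-1)
  have h_weyl := shift_inversion_eq hι hα
  rw [h_shift] at h_weyl
  have h_prod := inversion_shift_prod hι w
  have h_one : ι (∏ i, (zv i : RF k l) ^ (-w i)) * ∏ i, (zv i : RF k l) ^ (-w i) = 1 := by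
    simp [hι, Finset.prod_ne_zero_iff, zpow_ne_zero, zv_ne_zero]
  rw [zpow_add₀ (neg_ne_zero.2 one_ne_zero)]
  set M : RF k l := ∏ i, zv i ^ (-w i)
  calc (-1) ^ m * (-1) ^ (∑ i, w i) * densityInv ι w α
      = (-1) ^ (∑ i, w i) * shift (-1) M * ((-1) ^ m * shift (-1) (ι α)) := by
        rw [← h_shift_inv, densityInv, map_mul]
        ring
    _ = ι (shift (-1) (densityInv ι w α)) * M := by
        rw [← h_prod, ← h_weyl, densityInv, map_mul, map_mul]
        ring
    _ = α := by
        rw [h_shift_inv, densityInv, map_mul, inversion_inversion hι, mul_right_comm, h_one,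
          one_mul]

end Inversion

theorem statement2_general {k : Type} [Field k] [CharZero k] {l : ℕ}
    (D : Fin l → Derivation k (RF k l) (RF k l)) (hD : IsPartialDeriv D)
    (w : Fin l → ℤ) (α : RF k l) (hΦ : α ∈ Phi k l) (hne : α ≠ 0)
    (m : ℤ) (hhom : IsHomogeneousOn Finset.univ m α) (hreg : DeltaStar D w α = 0) :
    -(∑ i, w i) ≤ 2 * m ∧
    (2 * m = -(∑ i, w i) →
      Delta D α = 0 ∧
        ∀ ι : RF k l →ₐ[k] RF k l, (∀ i, ι (zv i) = (zv i)⁻¹) →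
          (-1) ^ m * densityInv ι w α = α) := by
  obtain ⟨n, hn, h_iter⟩ := exists_nat_eq_two_mul_degree_add_sum hD hΦ hne hhom hreg
  refine ⟨by lia, fun h_eq => ?_⟩
  obtain rfl : n = 0 := by lia
  have hΔ : Delta D α = 0 := by simpa using h_iter
  refine ⟨hΔ, fun ι hι => ?_⟩
  have h_sign : (-1 : RF k l) ^ (m + ∑ i, w i) = (-1) ^ m := by
    rw [show m + ∑ i, w i = -m by lia, neg_one_zpow_neg]
  rw [← h_sign, densityInv_eq_of_invariant hD hι hhom hΔ hreg]

/-- if `α ∈ Φ^l` is nonzero, homogeneous of degree `dα` and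
`(2d₁,…,2d_l)`-regular, then `dα ≥ -(d₁+⋯+d_l)`; and in case of equality,
`Δα = 0` and `α* = α`, where
`α* = (-1)^{Σdᵢ}·z₁^{-2d₁}⋯z_l^{-2d_l}·α(z₁⁻¹,…,z_l⁻¹)` (the substitution
`z_i ↦ z_i⁻¹` being expressed by the ring homomorphism `ι`). -/
theorem statement2 {k : Type} [Field k] [CharZero k] {l : ℕ}
    (D : Fin l → Derivation k (RF k l) (RF k l)) (hD : IsPartialDeriv D)
    (d : Fin l → ℤ) (α : RF k l) (hΦ : α ∈ Phi k l) (hne : α ≠ 0)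
    (dα : ℤ) (hhom : IsHomogeneousOn Finset.univ dα α)
    (hreg : DeltaStar D (fun i => 2 * d i) α = 0) :
    -(∑ i, d i) ≤ dα ∧
    (dα = -(∑ i, d i) →
      (Delta D α = 0 ∧
        ∀ ι : RF k l →+* RF k l, (∀ i, ι (zv i) = (zv i)⁻¹) →
          (∀ c : k, ι (algebraMap k (RF k l) c) = algebraMap k (RF k l) c) →
          ((-1 : RF k l) ^ (∑ i, d i)) * (∏ i, (zv i) ^ (-(2 * d i))) * ι α = α)) := by
  obtain ⟨h_le, h_eq⟩ := statement2_general D hD (fun i => 2 * d i) α hΦ hne dα hhom hreg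
  simp only [← Finset.mul_sum] at h_le h_eq
  refine ⟨by lia, fun h_deg => ⟨(h_eq (by lia)).1, fun ι hι hc => ?_⟩⟩
  rw [mul_assoc, ← neg_one_zpow_neg, ← h_deg]
  exact (h_eq (by lia)).2 { ι with commutes' := hc } hι

end Griess
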